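/- arXiv:2409.10948 — 2 statements merged into one kernel-verified Lean document; each statement's English description precedes it below -/
import Mathlib

section
/- Let τ ≥ 0, let m and l be nonnegative integers with l < m, and let h : ℂ → ℂ be an entire function of exponential type τ such that h(z) = ∑_{j=0}^∞ b_j z^{2m+2j} for all z ∈ ℂ, where b_0 ≠ 0, and such that the restriction of h to [0,∞) is real-valued and absolutely integrable, i.e. ∫_0^∞ |h(x)| dx < ∞. Then for every real λ > τ, the Hankel transform vanishes: ∫_0^∞ h(x) J_{2l+1}(λx) dx = 0. -/
/-!
Up to a constant, the Bessel function of order `n` is the integral over the segment from `-iπ/2`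
to `iπ/2` of `e^{-x sinh w}` against the entire function `e^{nw} + (-1)^n e^{-nw}`. Hence the
Hankel transform of `h` is, up to a constant, the integral over that segment of this function times
`H (λ sinh w)`, where `H` is the Laplace transform of `h`. By Cauchy's theorem on the half strip to
the right of the segment, the integral vanishes:

* On the horizontal sides `λ sinh w = ±iλ cosh u` lies outside the disc `|p| ≤ τ`. There `H` agrees
  with the Borel transform of `h`, so the parity of `h`, opposite to that of `n`, makes the two
  sides cancel.
* At the far end `H (p)` decays like `p⁻⁽ⁿ⁺¹⁾`, because `h` vanishes to order at least `n` at `0`,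
  and this beats the growth `e^{nw}`.
-/

open MeasureTheory Real

/-- Bessel function of the first kind of nonnegative integer order `n`. -/
noncomputable def besselJ (n : ℕ) (x : ℝ) : ℝ :=
  ∑' k : ℕ, (-1 : ℝ) ^ k / (Nat.factorial k * Nat.factorial (n + k)) * (x / 2) ^ (n + 2 * k)

/-- `f` is an entire function of exponential type `τ`. -/
def ExpType (τ : ℝ) (f : ℂ → ℂ) : Prop :=
  Differentiable ℂ f ∧
    ∀ ε > 0, ∃ C > 0, ∀ z : ℂ, ‖f z‖ ≤ C * Real.exp ((τ + ε) * ‖z‖)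

open Set Filter Bornology
open scoped Topology Nat Interval

/-! ### Power series -/

lemma comp_neg_eq_of_hasSum_even_pow {R : Type*} [Ring R] [TopologicalSpace R] [T2Space R]
    {ι : Type*} {f : R → R} {b : ι → R} {e : ι → ℕ} (he : ∀ j, Even (e j))
    (hf : ∀ z, HasSum (fun j ↦ b j * z ^ e j) (f z)) (z : R) : f (-z) = f z :=
  (hf (-z)).unique (by simpa only [(he _).neg_pow] using hf z)

lemma le_analyticOrderAt_zero_of_hasSum {𝕜 : Type*} [NontriviallyNormedField 𝕜] [CompleteSpace 𝕜]
    [CharZero 𝕜] {f : 𝕜 → 𝕜} {b : ℕ → 𝕜} {e : ℕ → ℕ} (he : e.Injective) {n : ℕ}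
    (hn : ∀ j, n ≤ e j) (hf : ∀ᶠ z in 𝓝 0, HasSum (fun j ↦ b j * z ^ e j) (f z)) :
    n ≤ analyticOrderAt f 0 := by
  have hseries : HasFPowerSeriesAt f (.ofScalars 𝕜 (Function.extend e b 0)) 0 := by
    rw [hasFPowerSeriesAt_iff]
    filter_upwards [hf] with z hz
    rw [zero_add]
    refine ((hasSum_extend_zero he).2 hz).congr_fun fun k ↦ ?_
    rw [FormalMultilinearSeries.coeff_ofScalars]
    by_cases hk : ∃ j, e j = k
    · obtain ⟨j, rfl⟩ := hk
      simp [he.extend_apply, mul_comm]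
    · simp [Function.extend_apply' _ _ _ hk]
  rw [natCast_le_analyticOrderAt_iff_iteratedDeriv_eq_zero hseries.analyticAt]
  intro k hk
  have hcoeff := congrArg (FormalMultilinearSeries.coeff · k)
    (hseries.analyticAt.hasFPowerSeriesAt.eq_formalMultilinearSeries hseries)
  have hne : ¬∃ j, e j = k := fun ⟨j, hj⟩ ↦ (hn j).not_gt (hj ▸ hk)
  simpa [FormalMultilinearSeries.coeff_ofScalars, Function.extend_apply' _ _ _ hne,
    k.factorial_ne_zero] using hcoeff

/-! ### The Laplace transform -/

lemma integrableOn_pow_mul_exp_neg_mul_Ioi {s : ℝ} (hs : 0 < s) (k : ℕ) :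
    IntegrableOn (fun x : ℝ ↦ x ^ k * exp (-(s * x))) (Ioi 0) := by
  have hk : (-1 : ℝ) < k := neg_one_lt_zero.trans_le k.cast_nonneg
  simpa using integrableOn_rpow_mul_exp_neg_mul_rpow hk one_pos hs

lemma integral_pow_mul_exp_neg_mul_Ioi {s : ℝ} (hs : 0 < s) (k : ℕ) :
    ∫ x in Ioi (0 : ℝ), x ^ k * exp (-(s * x)) = k ! / s ^ (k + 1) := by
  have h := integral_rpow_mul_exp_neg_mul_Ioi (a := k + 1) (by positivity) hs
  rw [add_sub_cancel_right, Gamma_nat_eq_factorial, ← Nat.cast_add_one] at h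
  simp only [rpow_natCast] at h
  rw [h, div_pow, one_pow, one_div_mul_eq_div]

/-- The one-sided Laplace transform `p ↦ ∫₀^∞ e^{-px} f(x) dx`, with the complex variable `p` as
argument of a function on `[0, ∞)`; the value is junk where the integral diverges. -/
noncomputable def laplaceTransform {E : Type*} [NormedAddCommGroup E] [NormedSpace ℂ E]
    (f : ℝ → E) (p : ℂ) : E :=
  ∫ x in Ioi (0 : ℝ), Complex.exp (-(p * x)) • f x

section LaplaceTransform

variable {E : Type*} [NormedAddCommGroup E] [NormedSpace ℂ E] {f : ℝ → E}

lemma norm_cexp_neg_mul_ofReal (p : ℂ) (x : ℝ) :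
    ‖Complex.exp (-(p * x))‖ = exp (-(p.re * x)) := by
  simp [Complex.norm_exp]

lemma norm_cexp_neg_mul_ofReal_le_one {p : ℂ} (hp : 0 ≤ p.re) {x : ℝ} (hx : 0 ≤ x) :
    ‖Complex.exp (-(p * x))‖ ≤ 1 := by
  rw [norm_cexp_neg_mul_ofReal, exp_le_one_iff, neg_nonpos]
  exact mul_nonneg hp hx

lemma integrableOn_cexp_smul (hf : IntegrableOn f (Ioi 0)) {p : ℂ} (hp : 0 ≤ p.re) :
    IntegrableOn (fun x : ℝ ↦ Complex.exp (-(p * x)) • f x) (Ioi 0) := by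
  have hcont : Continuous fun x : ℝ ↦ Complex.exp (-(p * x)) := by fun_prop
  refine hf.bdd_smul 1 hcont.aestronglyMeasurable ?_
  filter_upwards [ae_restrict_mem measurableSet_Ioi] with x hx
  exact norm_cexp_neg_mul_ofReal_le_one hp (le_of_lt hx)

lemma mul_exp_neg_mul_le_inv {c : ℝ} (hc : 0 < c) (x : ℝ) : x * exp (-(c * x)) ≤ c⁻¹ := by
  rw [exp_neg, mul_inv_le_iff₀ (exp_pos _), inv_mul_eq_div, le_div_iff₀ hc, mul_comm]
  linarith [add_one_le_exp (c * x)]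

lemma continuousOn_laplaceTransform (hf : IntegrableOn f (Ioi 0)) :
    ContinuousOn (laplaceTransform f) {p | 0 ≤ p.re} := by
  refine continuousOn_of_dominated (bound := fun x ↦ ‖f x‖) (fun p _ ↦ ?_) (fun p hp ↦ ?_)
    hf.norm (.of_forall fun x ↦ by fun_prop)
  · exact AEStronglyMeasurable.smul (by fun_prop) hf.1
  · filter_upwards [ae_restrict_mem measurableSet_Ioi] with x hx
    rw [norm_smul]
    exact mul_le_of_le_one_left (norm_nonneg _) (norm_cexp_neg_mul_ofReal_le_one hp (le_of_lt hx))

lemma differentiableAt_laplaceTransform (hf : IntegrableOn f (Ioi 0)) {p : ℂ} (hp : 0 < p.re) :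
    DifferentiableAt ℂ (laplaceTransform f) p := by
  have hmem : {q : ℂ | p.re / 2 < q.re} ∈ 𝓝 p :=
    (isOpen_lt continuous_const Complex.continuous_re).mem_nhds (half_lt_self hp)
  have hmeas (g : ℝ → ℂ) (hg : Continuous g) :
      AEStronglyMeasurable (fun x ↦ g x • f x) (volume.restrict (Ioi 0)) :=
    hg.aestronglyMeasurable.smul hf.1
  refine (hasDerivAt_integral_of_dominated_loc_of_deriv_le
    (F := fun q (x : ℝ) ↦ Complex.exp (-(q * x)) • f x)
    (F' := fun q (x : ℝ) ↦ (Complex.exp (-(q * x)) * -x) • f x)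
    (bound := fun x ↦ (p.re / 2)⁻¹ * ‖f x‖) hmem (.of_forall fun q ↦ hmeas _ (by fun_prop))
    (integrableOn_cexp_smul hf hp.le) (hmeas _ (by fun_prop)) ?_ (hf.norm.const_mul _)
    ?_).2.differentiableAt
  · filter_upwards [ae_restrict_mem measurableSet_Ioi] with x (hx : 0 < x) q hq
    have : p.re / 2 < q.re := hq
    rw [norm_smul, norm_mul, norm_neg, Complex.norm_of_nonneg hx.le, norm_cexp_neg_mul_ofReal,
      mul_comm (exp _)]
    gcongr
    calc x * exp (-(q.re * x)) ≤ x * exp (-(p.re / 2 * x)) := by gcongr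
      _ ≤ (p.re / 2)⁻¹ := mul_exp_neg_mul_le_inv (half_pos hp) x
  · refine .of_forall fun x q _ ↦ HasDerivAt.smul_const ?_ _
    simpa using ((hasDerivAt_id q).mul_const (x : ℂ)).neg.cexp

lemma diffContOnCl_laplaceTransform (hf : IntegrableOn f (Ioi 0)) :
    DiffContOnCl ℂ (laplaceTransform f) {p | 0 < p.re} where
  differentiableOn _ hp := (differentiableAt_laplaceTransform hf hp).differentiableWithinAt
  continuousOn := by
    rw [Complex.closure_setOfPred_lt_re]
    exact continuousOn_laplaceTransform hf

end LaplaceTransform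

/-! ### The Borel transform -/

-- Cauchy's estimate on the circle of radius `r`, averaged over `r` with weight `r ^ k * e^{-sr}`,
-- loses no power of `k`, unlike the optimal choice of a single `r`.
lemma ExpType.exists_norm_iteratedDeriv_le {τ : ℝ} {f : ℂ → ℂ} (hf : ExpType τ f) {s : ℝ}
    (hs : 0 < s) (hτs : τ < s) : ∃ K, ∀ k, ‖iteratedDeriv k f 0‖ ≤ K * s ^ k := by
  set δ : ℝ := (s - τ) / 2 with hδ
  have hδ0 : 0 < δ := half_pos (sub_pos.2 hτs)
  obtain ⟨C, hC, hbound⟩ := hf.2 δ hδ0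
  refine ⟨C / δ * s, fun k ↦ ?_⟩
  have cauchy : ∀ r ∈ Ioi (0 : ℝ),
      ‖iteratedDeriv k f 0‖ * (r ^ k * exp (-(s * r))) ≤ k ! * C * (r ^ 0 * exp (-(δ * r))) := by
    intro r hr
    have hr : 0 < r := hr
    have hsphere (z : ℂ) (hz : z ∈ Metric.sphere 0 r) : ‖f z‖ ≤ C * exp ((τ + δ) * r) := by
      simpa [mem_sphere_zero_iff_norm.1 hz] using hbound z
    have h := Complex.norm_iteratedDeriv_le_of_forall_mem_sphere_norm_le k hr
      hf.1.diffContOnCl hsphere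
    rw [le_div_iff₀ (by positivity)] at h
    calc ‖iteratedDeriv k f 0‖ * (r ^ k * exp (-(s * r)))
        ≤ k ! * (C * exp ((τ + δ) * r)) * exp (-(s * r)) := by rw [← mul_assoc]; gcongr
      _ = k ! * C * (r ^ 0 * exp (-(δ * r))) := by
        rw [mul_assoc, mul_assoc C, ← exp_add, hδ]; ring_nf
  have averaged := setIntegral_mono_on ((integrableOn_pow_mul_exp_neg_mul_Ioi hs k).const_mul _)
    ((integrableOn_pow_mul_exp_neg_mul_Ioi hδ0 0).const_mul _) measurableSet_Ioi cauchy
  simp only [integral_const_mul, integral_pow_mul_exp_neg_mul_Ioi hs,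
    integral_pow_mul_exp_neg_mul_Ioi hδ0] at averaged
  rw [← mul_div_assoc, div_le_iff₀ (by positivity), mul_comm, mul_assoc] at averaged
  refine (le_of_mul_le_mul_left (averaged.trans_eq ?_) (by positivity : (0 : ℝ) < k !))
  field_simp
  ring

/-- The Borel transform `∑ f⁽ᵏ⁾(0) / p ^ (k + 1)` of an entire function `f`: the termwise Laplace
transform of its Taylor series at `0`. For `f` of exponential type `τ` the series converges when
`τ < ‖p‖`; elsewhere the value may be junk. -/
noncomputable def borelTransform (f : ℂ → ℂ) (p : ℂ) : ℂ :=
  ∑' k : ℕ, iteratedDeriv k f 0 / p ^ (k + 1)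

lemma borelTransform_comp_neg (f : ℂ → ℂ) (p : ℂ) :
    borelTransform (fun z ↦ f (-z)) p = -borelTransform f (-p) := by
  simp only [borelTransform, ← tsum_neg, iteratedDeriv_comp_neg, neg_zero]
  refine tsum_congr fun k ↦ ?_
  rcases k.even_or_odd with hk | hk
  · simp [hk.neg_one_pow, hk.add_one.neg_pow, div_neg]
  · simp [hk.neg_one_pow, hk.add_one.neg_pow, neg_div]

lemma borelTransform_const_mul (c : ℂ) (f : ℂ → ℂ) (p : ℂ) :
    borelTransform (fun z ↦ c * f z) p = c * borelTransform f p := by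
  simp [borelTransform, iteratedDeriv_const_mul_field, mul_div_assoc, tsum_mul_left]

lemma borelTransform_neg_of_comp_neg {f : ℂ → ℂ} {c : ℂ} (hf : ∀ z, f (-z) = c * f z) (p : ℂ) :
    borelTransform f (-p) = -c * borelTransform f p := by
  rw [← neg_neg (borelTransform f (-p)), ← borelTransform_comp_neg, funext hf,
    borelTransform_const_mul, neg_mul]

section BorelTransform

variable {τ : ℝ} {f : ℂ → ℂ} (hτ : 0 ≤ τ) (hf : ExpType τ f)
include hτ hf

lemma ExpType.summable_norm_iteratedDeriv_div {t : ℝ} (ht : τ < t) :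
    Summable fun k ↦ ‖iteratedDeriv k f 0‖ / t ^ (k + 1) := by
  obtain ⟨s, hτs, hst⟩ := exists_between ht
  have hs : 0 < s := hτ.trans_lt hτs
  have ht : 0 < t := hs.trans hst
  obtain ⟨K, hK⟩ := hf.exists_norm_iteratedDeriv_le hs hτs
  refine .of_nonneg_of_le (fun k ↦ by positivity) (fun k ↦ ?_)
    ((summable_geometric_of_lt_one (by positivity) ((div_lt_one ht).2 hst)).mul_left (K / t))
  calc ‖iteratedDeriv k f 0‖ / t ^ (k + 1) ≤ K * s ^ k / t ^ (k + 1) := by gcongr; exact hK k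
    _ = K / t * (s / t) ^ k := by rw [div_pow]; field_simp; ring

lemma ExpType.differentiableOn_borelTransform :
    DifferentiableOn ℂ (borelTransform f) {p | τ < ‖p‖} := by
  intro p (hp : τ < ‖p‖)
  obtain ⟨t, hτt, htp⟩ := exists_between hp
  have ht : 0 < t := hτ.trans_lt hτt
  have hopen : IsOpen {q : ℂ | t < ‖q‖} := isOpen_lt continuous_const continuous_norm
  refine (DifferentiableOn.differentiableAt ?_ (hopen.mem_nhds htp)).differentiableWithinAt
  refine Complex.differentiableOn_tsum_of_summable_norm
    (hf.summable_norm_iteratedDeriv_div hτ hτt) (fun k q hq ↦ ?_) hopen fun k q hq ↦ ?_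
  · have hq : q ^ (k + 1) ≠ 0 := pow_ne_zero _ (norm_pos_iff.1 (ht.trans hq))
    fun_prop (disch := assumption)
  · have hq : t < ‖q‖ := hq
    rw [norm_div, norm_pow]
    gcongr

lemma ExpType.borelTransform_isBigO {n : ℕ} (hn : n ≤ analyticOrderAt f 0) :
    borelTransform f =O[cobounded ℂ] fun p ↦ (p ^ (n + 1))⁻¹ := by
  set t : ℝ := τ + 1
  have ht : 0 < t := by positivity
  have hS := hf.summable_norm_iteratedDeriv_div hτ (lt_add_one τ)
  rw [natCast_le_analyticOrderAt_iff_iteratedDeriv_eq_zero (hf.1.analyticAt 0)] at hn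
  refine .of_bound ((∑' k, ‖iteratedDeriv k f 0‖ / t ^ (k + 1)) * t ^ (n + 1)) ?_
  filter_upwards [tendsto_norm_cobounded_atTop.eventually_ge_atTop t] with p hp
  have hp0 : 0 < ‖p‖ := ht.trans_le hp
  rw [norm_inv, norm_pow, mul_assoc]
  refine tsum_of_norm_bounded (hS.hasSum.mul_right _) fun k ↦ ?_
  rcases lt_or_ge k n with hk | hk
  · simp only [hn k hk, zero_div, norm_zero]
    positivity
  · have hpow : (t / ‖p‖) ^ (k + 1) ≤ (t / ‖p‖) ^ (n + 1) :=
      pow_le_pow_of_le_one (by positivity) ((div_le_one hp0).2 hp) (by omega)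
    calc ‖iteratedDeriv k f 0 / p ^ (k + 1)‖
        = ‖iteratedDeriv k f 0‖ / t ^ (k + 1) * (t / ‖p‖) ^ (k + 1) := by
          rw [norm_div, norm_pow, div_pow]; field_simp
      _ ≤ ‖iteratedDeriv k f 0‖ / t ^ (k + 1) * (t / ‖p‖) ^ (n + 1) := by gcongr
      _ = ‖iteratedDeriv k f 0‖ / t ^ (k + 1) * (t ^ (n + 1) * (‖p‖ ^ (n + 1))⁻¹) := by
          rw [div_pow, div_eq_mul_inv (t ^ (n + 1))]

lemma ExpType.laplaceTransform_ofReal_eq_borelTransform {s : ℝ} (hs : τ < s) :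
    laplaceTransform (fun x : ℝ ↦ f x) s = borelTransform f s := by
  have hs0 : 0 < s := hτ.trans_lt hs
  set F : ℕ → ℝ → ℂ := fun k x ↦
    iteratedDeriv k f 0 / k ! * (x ^ k * exp (-(s * x)) : ℝ) with hF
  have hF_norm (k : ℕ) : ∀ x ∈ Ioi (0 : ℝ),
      ‖F k x‖ = ‖iteratedDeriv k f 0‖ / k ! * (x ^ k * exp (-(s * x))) := by
    intro x (hx : 0 < x)
    rw [norm_mul, norm_div, Complex.norm_natCast, Complex.norm_of_nonneg (by positivity)]
  have hF_int (k : ℕ) : IntegrableOn (F k) (Ioi 0) :=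
    (integrableOn_pow_mul_exp_neg_mul_Ioi hs0 k).ofReal.const_mul _
  have hF_sum : Summable fun k ↦ ∫ x in Ioi (0 : ℝ), ‖F k x‖ := by
    refine (hf.summable_norm_iteratedDeriv_div hτ hs).congr fun k ↦ ?_
    rw [setIntegral_congr_fun measurableSet_Ioi (hF_norm k), integral_const_mul,
      integral_pow_mul_exp_neg_mul_Ioi hs0]
    field_simp
  calc laplaceTransform (fun x : ℝ ↦ f x) s
      = ∫ x in Ioi (0 : ℝ), ∑' k, F k x := by
        refine integral_congr_ae (.of_forall fun x ↦ ?_)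
        have taylor := (Complex.hasSum_taylorSeries_of_entire hf.1 0 x).mul_left
          (Complex.exp (-(s * x)))
        simp only [smul_eq_mul, ← taylor.tsum_eq, hF, sub_zero]
        exact tsum_congr fun k ↦ by push_cast; ring
    _ = ∑' k, ∫ x in Ioi (0 : ℝ), F k x :=
        (integral_tsum_of_summable_integral_norm hF_int hF_sum).symm
    _ = borelTransform f s := by
        refine tsum_congr fun k ↦ ?_
        have hk : (k ! : ℂ) ≠ 0 := Nat.cast_ne_zero.2 k.factorial_ne_zero
        rw [integral_const_mul, integral_complex_ofReal, integral_pow_mul_exp_neg_mul_Ioi hs0]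
        push_cast
        field_simp

end BorelTransform

lemma isPreconnected_re_pos_inter_lt_norm {r : ℝ} (hr : 0 ≤ r) :
    IsPreconnected ({p : ℂ | 0 < p.re} ∩ {p | r < ‖p‖}) := by
  have hconvex : Convex ℝ ({q : ℂ | 0 < q.re} ∩ {q | r * ‖q‖ < 1}) :=
    (convex_halfSpace_re_gt 0).inter <| by simpa using (convexOn_univ_norm.smul hr).convex_lt 1
  have hcont : ContinuousOn (fun q : ℂ ↦ q⁻¹) ({q : ℂ | 0 < q.re} ∩ {q | r * ‖q‖ < 1}) :=
    continuousOn_inv₀.mono fun q hq h ↦ by simp_all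
  convert hconvex.isPreconnected.image _ hcont using 1
  ext p
  rcases eq_or_ne p 0 with rfl | hp
  · simp
  · have hp0 : 0 < ‖p‖ := norm_pos_iff.2 hp
    simp [Complex.inv_re, div_pos_iff_of_pos_right (Complex.normSq_pos.2 hp), ← div_eq_mul_inv,
      div_lt_one hp0]

lemma ExpType.eqOn_laplaceTransform_borelTransform {τ : ℝ} {f : ℂ → ℂ} (hτ : 0 ≤ τ)
    (hf : ExpType τ f) (hint : IntegrableOn (fun x : ℝ ↦ f x) (Ioi 0)) :
    EqOn (laplaceTransform fun x : ℝ ↦ f x) (borelTransform f)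
      ({p | 0 ≤ p.re} ∩ {p | τ < ‖p‖}) := by
  have hre : IsOpen {p : ℂ | 0 < p.re} := isOpen_lt continuous_const Complex.continuous_re
  have hnorm : IsOpen {p : ℂ | τ < ‖p‖} := isOpen_lt continuous_const continuous_norm
  have hL : DiffContOnCl ℂ (laplaceTransform fun x : ℝ ↦ f x) {p | 0 < p.re} :=
    diffContOnCl_laplaceTransform hint
  have hB : DifferentiableOn ℂ (borelTransform f) {p | τ < ‖p‖} :=
    hf.differentiableOn_borelTransform hτ
  have hmem : ((τ + 1 : ℝ) : ℂ) ∈ {p : ℂ | 0 < p.re} ∩ {p | τ < ‖p‖} := by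
    have : 0 < τ + 1 := by positivity
    constructor <;> simp [-Complex.ofReal_add, abs_of_pos this, this]
  have hreal : ∃ᶠ p in 𝓝[≠] ((τ + 1 : ℝ) : ℂ),
      laplaceTransform (fun x : ℝ ↦ f x) p = borelTransform f p := by
    have htendsto : Tendsto ((↑) : ℝ → ℂ) (𝓝[≠] (τ + 1)) (𝓝[≠] ((τ + 1 : ℝ) : ℂ)) :=
      Complex.continuous_ofReal.continuousWithinAt.tendsto_nhdsWithin
        fun x hx ↦ Complex.ofReal_injective.ne hx
    refine htendsto.frequently (Eventually.frequently ?_)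
    filter_upwards [nhdsWithin_le_nhds (lt_mem_nhds (lt_add_one τ))] with s hs
    exact hf.laplaceTransform_ofReal_eq_borelTransform hτ hs
  have hopen : EqOn (laplaceTransform fun x : ℝ ↦ f x) (borelTransform f)
      ({p | 0 < p.re} ∩ {p | τ < ‖p‖}) :=
    ((hL.differentiableOn.mono inter_subset_left).analyticOnNhd
      (hre.inter hnorm)).eqOn_of_preconnected_of_frequently_eq
      ((hB.mono inter_subset_right).analyticOnNhd (hre.inter hnorm))
      (isPreconnected_re_pos_inter_lt_norm hτ) hmem hreal
  rw [← Complex.closure_setOfPred_lt_re]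
  exact hopen.of_subset_closure (hL.continuousOn.mono inter_subset_left)
    (hB.continuousOn.mono inter_subset_right) (inter_subset_inter_left _ subset_closure)
    hnorm.closure_inter

/-! ### Bessel functions -/

lemma integral_cexp_int_mul_I (k : ℤ) (a : ℝ) :
    ∫ θ in a..a + 2 * π, Complex.exp (k * (θ * Complex.I)) = if k = 0 then (2 * π : ℂ) else 0 := by
  split_ifs with hk
  · simp [hk]
  · have hk' : (k : ℂ) * Complex.I ≠ 0 := mul_ne_zero (Int.cast_ne_zero.2 hk) Complex.I_ne_zero
    have hper : Complex.exp (k * Complex.I * (a + 2 * π : ℝ)) =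
        Complex.exp (k * Complex.I * a) := by
      rw [← Complex.exp_periodic.int_mul k (k * Complex.I * a)]
      push_cast
      ring_nf
    simp only [mul_left_comm (k : ℂ), mul_comm _ ((k : ℂ) * Complex.I),
      integral_exp_mul_complex hk', hper, sub_self, zero_div]

lemma hasSum_integral_mul_cexp_int_mul_I {ι : Type*} [Countable ι] {c : ι → ℂ} {k : ι → ℤ}
    {g : ℝ → ℂ} (hc : Summable fun i ↦ ‖c i‖)
    (hg : ∀ θ : ℝ, HasSum (fun i ↦ c i * Complex.exp (k i * (θ * Complex.I))) (g θ)) (a : ℝ) :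
    HasSum (fun i ↦ if k i = 0 then c i * (2 * π) else 0) (∫ θ in a..a + 2 * π, g θ) := by
  have hterm (i : ι) : ∫ θ in a..a + 2 * π, c i * Complex.exp (k i * (θ * Complex.I)) =
      if k i = 0 then c i * (2 * π) else 0 := by
    rw [intervalIntegral.integral_const_mul, integral_cexp_int_mul_I]
    split_ifs <;> simp
  have hnorm (i : ι) (θ : ℝ) : ‖c i * Complex.exp (k i * (θ * Complex.I))‖ = ‖c i‖ := by
    simp [Complex.norm_exp]
  simp only [← hterm]
  exact intervalIntegral.hasSum_integral_of_dominated_convergence (fun i _ ↦ ‖c i‖)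
    (fun i ↦ by fun_prop) (fun i ↦ .of_forall fun θ _ ↦ (hnorm i θ).le)
    (.of_forall fun _ _ ↦ hc) intervalIntegrable_const (.of_forall fun θ _ ↦ hg θ)

lemma hasSum_pow_div_factorial (z : ℂ) : HasSum (fun k ↦ z ^ k / k !) (Complex.exp z) := by
  rw [Complex.exp_eq_exp_ℂ]
  exact NormedSpace.expSeries_div_hasSum_exp z

lemma summable_norm_pow_div_factorial (z : ℂ) : Summable fun k ↦ ‖z ^ k / (k ! : ℂ)‖ :=
  NormedSpace.norm_expSeries_div_summable z

lemma hasSum_cexp_mul_sub_mul_sinh (n : ℕ) (x w : ℂ) :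
    HasSum (fun i : ℕ × ℕ ↦ (x / 2) ^ i.1 / i.1 ! * ((-(x / 2)) ^ i.2 / i.2 !) *
      Complex.exp ((n + i.2 - i.1 : ℤ) * w)) (Complex.exp (n * w - x * Complex.sinh w)) := by
  have hexp : Complex.exp (n * w - x * Complex.sinh w) = Complex.exp (n * w) *
      (Complex.exp (x / 2 * Complex.exp (-w)) * Complex.exp (-(x / 2) * Complex.exp w)) := by
    rw [← Complex.exp_add, ← Complex.exp_add, Complex.sinh]
    ring_nf
  rw [hexp]
  have hprod := ((hasSum_pow_div_factorial (x / 2 * Complex.exp (-w))).mul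
    (hasSum_pow_div_factorial (-(x / 2) * Complex.exp w))
    ((summable_norm_pow_div_factorial _).mul_norm
      (summable_norm_pow_div_factorial _)).of_norm).mul_left (Complex.exp (n * w))
  refine hprod.congr_fun fun i ↦ ?_
  have hsplit : ((n + i.2 - i.1 : ℤ) : ℂ) * w = n * w + i.1 * -w + i.2 * w := by push_cast; ring
  rw [hsplit, Complex.exp_add, Complex.exp_add, Complex.exp_nat_mul _ i.1,
    Complex.exp_nat_mul _ i.2, mul_pow, mul_pow]
  ring

lemma besselJ_mul_two_pi (n : ℕ) (x a : ℝ) : (besselJ n x : ℂ) * (2 * π) =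
    ∫ θ in a..a + 2 * π,
      Complex.exp (n * (θ * Complex.I) - x * Complex.sinh (θ * Complex.I)) := by
  have hcoeff := (summable_norm_pow_div_factorial (x / 2)).mul_norm
    (summable_norm_pow_div_factorial (-(x / 2)))
  have hS := (hasSum_integral_mul_cexp_int_mul_I hcoeff
    (fun θ ↦ hasSum_cexp_mul_sub_mul_sinh n x (θ * Complex.I)) a).tsum_eq
  have hinj : Function.Injective fun k : ℕ ↦ (n + k, k) := fun _ _ h ↦ (Prod.ext_iff.1 h).2
  rw [← hS, ← hinj.tsum_eq, besselJ, Complex.ofReal_tsum, ← tsum_mul_right]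
  · refine tsum_congr fun k ↦ ?_
    rw [if_pos (by simp), neg_pow (x / 2 : ℂ)]
    push_cast
    ring
  · intro i hi
    refine ⟨i.2, Prod.ext ?_ rfl⟩
    by_contra hne
    exact hi (if_neg (by dsimp at hne ⊢; omega))

lemma cexp_nat_mul_pi_mul_I (n : ℕ) : Complex.exp (n * (π * Complex.I)) = (-1) ^ n := by
  rw [Complex.exp_nat_mul, Complex.exp_pi_mul_I]

/-- The factor `e^{nw} + (-1)^n e^{-nw}` by which `besselJ n` is represented as an integral
over half a period: `2 cosh (n w)` for even `n` and `2 sinh (n w)` for odd `n`. -/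
noncomputable def besselKernel (n : ℕ) (w : ℂ) : ℂ :=
  Complex.exp (n * w) + (-1) ^ n * Complex.exp (-(n * w))

lemma differentiable_besselKernel (n : ℕ) : Differentiable ℂ (besselKernel n) := by
  unfold besselKernel
  fun_prop

lemma besselKernel_sub_pi_mul_I (n : ℕ) (w : ℂ) :
    besselKernel n (w - π * Complex.I) = (-1) ^ n * besselKernel n w := by
  rw [besselKernel, besselKernel, mul_sub, neg_sub, Complex.exp_sub, Complex.exp_sub,
    cexp_nat_mul_pi_mul_I, Complex.exp_neg]
  rcases n.even_or_odd with hn | hn <;> simp [hn.neg_one_pow, div_eq_mul_inv, add_comm]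

lemma besselJ_mul_two_pi_eq_integral_besselKernel (n : ℕ) (x : ℝ) : (besselJ n x : ℂ) * (2 * π) =
    ∫ θ in -(π / 2)..π / 2, besselKernel n (θ * Complex.I) *
      Complex.exp (-(x * Complex.sinh (θ * Complex.I))) := by
  set g : ℝ → ℂ := fun θ ↦ Complex.exp (n * (θ * Complex.I) - x * Complex.sinh (θ * Complex.I))
    with hg
  have hint (c d : ℝ) : IntervalIntegrable g volume c d :=
    Continuous.intervalIntegrable (by fun_prop) c d
  have hrefl (θ : ℝ) : g θ + g (π - θ) = besselKernel n (θ * Complex.I) *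
      Complex.exp (-(x * Complex.sinh (θ * Complex.I))) := by
    simp only [hg, besselKernel, Complex.ofReal_sub, sub_mul, Complex.sinh_mul_I,
      Complex.sin_pi_sub]
    rw [mul_sub, sub_eq_add_neg, sub_eq_add_neg, Complex.exp_add, Complex.exp_add, sub_eq_add_neg,
      Complex.exp_add, cexp_nat_mul_pi_mul_I]
    ring
  have hshift : ∫ θ in π / 2..-(π / 2) + 2 * π, g θ = ∫ θ in -(π / 2)..π / 2, g (π - θ) := by
    rw [intervalIntegral.integral_comp_sub_left]
    congr 1 <;> ring
  rw [besselJ_mul_two_pi n x (-(π / 2)),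
    ← intervalIntegral.integral_add_adjacent_intervals (hint _ (π / 2)) (hint _ _), hshift,
    ← intervalIntegral.integral_add (hint _ _)
      (Continuous.intervalIntegrable (by fun_prop) _ _)]
  exact intervalIntegral.integral_congr fun θ _ ↦ hrefl θ

lemma re_sinh (w : ℂ) : (Complex.sinh w).re = sinh w.re * cos w.im := by
  rw [← Complex.re_add_im w, Complex.sinh_add, Complex.sinh_mul_I, Complex.cosh_mul_I]
  simp [← Complex.ofReal_sinh, ← Complex.ofReal_cos]

lemma exp_isBigO_sinh_comap_re_atTop :
    Complex.exp =O[comap Complex.re atTop] Complex.sinh := by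
  refine .of_bound 4 ?_
  filter_upwards [tendsto_comap.eventually_ge_atTop 1] with w (hw : 1 ≤ w.re)
  have hexp : 2 ≤ exp w.re := by linarith [add_one_le_exp w.re]
  have hexp_neg : exp (-w.re) ≤ 1 := exp_le_one_iff.2 (by linarith)
  have hsub := norm_sub_norm_le (Complex.exp w) (Complex.exp (-w))
  rw [← Complex.two_sinh, norm_mul, Complex.norm_ofNat, Complex.norm_exp, Complex.norm_exp,
    Complex.neg_re] at hsub
  rw [Complex.norm_exp]
  linarith

lemma besselKernel_isBigO_exp_comap_re_atTop (n : ℕ) :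
    besselKernel n =O[comap Complex.re atTop] fun w ↦ Complex.exp w ^ n := by
  refine .of_bound 2 ?_
  filter_upwards [tendsto_comap.eventually_ge_atTop 0] with w (hw : 0 ≤ w.re)
  have hneg : ‖Complex.exp (-(n * w))‖ ≤ ‖Complex.exp (n * w)‖ := by
    have : 0 ≤ n * w.re := by positivity
    simpa [Complex.norm_exp] using by linarith
  calc ‖besselKernel n w‖ ≤ ‖Complex.exp (n * w)‖ + ‖Complex.exp (-(n * w))‖ := by
        simpa [besselKernel] using norm_add_le (Complex.exp (n * w))
          ((-1) ^ n * Complex.exp (-(n * w)))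
    _ ≤ 2 * ‖Complex.exp w ^ n‖ := by rw [← Complex.exp_nat_mul]; linarith

lemma tendsto_const_mul_sinh_cobounded {c : ℂ} (hc : c ≠ 0) :
    Tendsto (fun w ↦ c * Complex.sinh w) (comap Complex.re atTop) (cobounded ℂ) :=
  tendsto_norm_atTop_iff_cobounded.1 <|
    (exp_isBigO_sinh_comap_re_atTop.const_mul_right hc).trans_tendsto_norm_atTop <|
      tendsto_norm_atTop_iff_cobounded.2 Complex.tendsto_exp_comap_re_atTop

lemma tendsto_besselKernel_mul_comp_sinh {B : ℂ → ℂ} {n : ℕ}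
    (hB : B =O[cobounded ℂ] fun p ↦ (p ^ (n + 1))⁻¹) {c : ℂ} (hc : c ≠ 0) :
    Tendsto (fun w ↦ besselKernel n w * B (c * Complex.sinh w)) (comap Complex.re atTop)
      (𝓝 0) := by
  have hinv : (fun w ↦ B (c * Complex.sinh w)) =O[comap Complex.re atTop]
      fun w ↦ (Complex.exp w ^ (n + 1))⁻¹ :=
    (hB.comp_tendsto (tendsto_const_mul_sinh_cobounded hc)).trans <|
      ((exp_isBigO_sinh_comap_re_atTop.const_mul_right hc).pow (n + 1)).inv_rev
        (.of_forall fun w hw ↦ by simp at hw)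
  have hexp (w : ℂ) : Complex.exp w ^ n * (Complex.exp w ^ (n + 1))⁻¹ = (Complex.exp w)⁻¹ := by
    rw [pow_succ]
    field_simp
  refine ((besselKernel_isBigO_exp_comap_re_atTop n).mul hinv).trans_tendsto ?_
  simp only [hexp]
  exact tendsto_inv₀_cobounded.comp Complex.tendsto_exp_comap_re_atTop

/-! ### The contour integral -/

section VerticalIntegral

variable {E : Type*} [NormedAddCommGroup E] [NormedSpace ℂ E] {F : ℂ → E} {a b : ℝ}

lemma integral_vertical_eq_integral_vertical_shift (hab : a < b)
    (hF : DiffContOnCl ℂ F (Ioi 0 ×ℂ Ioo a b))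
    (hside : ∀ u : ℝ, 0 ≤ u → F (u + a * Complex.I) = F (u + b * Complex.I))
    {R : ℝ} (hR : 0 ≤ R) :
    ∫ v in a..b, F (v * Complex.I) = ∫ v in a..b, F (R + v * Complex.I) := by
  have hcont : ContinuousOn F (Ici 0 ×ℂ Icc a b) := by
    simpa [Complex.closure_reProdIm, closure_Ioo hab.ne] using hF.continuousOn
  have hrect := Complex.integral_boundary_rect_eq_zero_of_continuousOn_of_differentiableOn F
    (a * Complex.I) (R + b * Complex.I)
    (hcont.mono fun z hz ↦ by simp_all [Complex.mem_reProdIm, uIcc_of_le hab.le])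
    (hF.differentiableOn.mono fun z hz ↦ by simp_all [Complex.mem_reProdIm, hab.le])
  have hsides : ∫ u in (0 : ℝ)..R, F (u + a * Complex.I) =
      ∫ u in (0 : ℝ)..R, F (u + b * Complex.I) :=
    intervalIntegral.integral_congr fun u hu ↦ hside u (uIcc_of_le hR ▸ hu).1
  symm
  simpa [hsides, sub_eq_zero] using hrect

lemma integral_vertical_eq_zero_of_tendsto_zero (hab : a < b)
    (hF : DiffContOnCl ℂ F (Ioi 0 ×ℂ Ioo a b))
    (hside : ∀ u : ℝ, 0 ≤ u → F (u + a * Complex.I) = F (u + b * Complex.I))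
    (hlim : Tendsto F (comap Complex.re atTop ⊓ 𝓟 (univ ×ℂ Icc a b)) (𝓝 0)) :
    ∫ v in a..b, F (v * Complex.I) = 0 := by
  have hlen : 0 < b - a := sub_pos.2 hab
  have small (ε : ℝ) (hε : 0 < ε) : ‖∫ v in a..b, F (v * Complex.I)‖ ≤ ε * (b - a) := by
    have hev := hlim.norm.eventually_le_const (norm_zero.trans_lt hε)
    rw [eventually_inf_principal, eventually_comap] at hev
    obtain ⟨R, hR, hR0⟩ := (hev.and (eventually_ge_atTop 0)).exists
    rw [integral_vertical_eq_integral_vertical_shift hab hF hside hR0, ← abs_of_pos hlen]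
    refine intervalIntegral.norm_integral_le_of_norm_le_const fun v hv ↦ hR _ (by simp) ?_
    rw [uIoc_of_le hab.le] at hv
    simp [Complex.mem_reProdIm, hv.1.le, hv.2]
  refine norm_le_zero_iff.1 (le_of_forall_pos_le_add fun ε hε ↦ ?_)
  simpa [hlen.ne'] using small (ε / (b - a)) (div_pos hε hlen)

end VerticalIntegral

/-- The function `w ↦ besselKernel n w * (laplaceTransform f) (c sinh w)`, whose integral over the
segment from `-iπ/2` to `iπ/2` is the order `n` Hankel transform of `f` at `c`, up to a constant
factor. -/
noncomputable def hankelIntegrand (n : ℕ) (f : ℝ → ℂ) (c : ℝ) (w : ℂ) : ℂ :=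
  besselKernel n w * laplaceTransform f (c * Complex.sinh w)

lemma integral_mul_besselJ {f : ℝ → ℂ} (hf : IntegrableOn f (Ioi 0)) (n : ℕ) (c : ℝ) :
    (∫ x in Ioi (0 : ℝ), f x * (besselJ n (c * x) : ℂ)) * (2 * π) =
      ∫ θ in -(π / 2)..π / 2, hankelIntegrand n f c (θ * Complex.I) := by
  set e : ℝ → ℝ → ℂ := fun θ x ↦ Complex.exp (-(c * Complex.sinh (θ * Complex.I) * x)) with he
  have hprod : Integrable (fun i : ℝ × ℝ ↦
      e i.1 i.2 * (besselKernel n (i.1 * Complex.I) * f i.2))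
      ((volume.restrict (Ι (-(π / 2)) (π / 2))).prod (volume.restrict (Ioi 0))) := by
    have hcont : Continuous fun θ : ℝ ↦ besselKernel n (θ * Complex.I) :=
      (differentiable_besselKernel n).continuous.comp (by fun_prop)
    refine ((intervalIntegrable_iff.1 (hcont.intervalIntegrable _ _)).mul_prod hf).bdd_mul
      (c := 1) (by fun_prop) (.of_forall fun i ↦ ?_)
    simp [he, Complex.norm_exp, Complex.sinh_mul_I]
  calc (∫ x in Ioi (0 : ℝ), f x * (besselJ n (c * x) : ℂ)) * (2 * π)
      = ∫ x in Ioi (0 : ℝ), ∫ θ in -(π / 2)..π / 2,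
          e θ x * (besselKernel n (θ * Complex.I) * f x) := by
        rw [← integral_mul_const]
        refine integral_congr_ae (.of_forall fun x ↦ ?_)
        simp only [mul_assoc (f x), besselJ_mul_two_pi_eq_integral_besselKernel,
          ← intervalIntegral.integral_const_mul]
        congr! 2
        simp only [he, Complex.ofReal_mul]
        ring_nf
    _ = ∫ θ in -(π / 2)..π / 2, ∫ x in Ioi (0 : ℝ),
          e θ x * (besselKernel n (θ * Complex.I) * f x) :=
        (intervalIntegral_integral_swap hprod).symm
    _ = _ := by
        simp only [mul_left_comm, integral_const_mul, hankelIntegrand, laplaceTransform, he,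
          smul_eq_mul]

lemma diffContOnCl_hankelIntegrand {f : ℝ → ℂ} (hf : IntegrableOn f (Ioi 0)) (n : ℕ) {c : ℝ}
    (hc : 0 < c) :
    DiffContOnCl ℂ (hankelIntegrand n f c) (Ioi 0 ×ℂ Ioo (-(π / 2)) (π / 2)) := by
  have hmaps : MapsTo (fun w ↦ c * Complex.sinh w) (Ioi 0 ×ℂ Ioo (-(π / 2)) (π / 2))
      {p : ℂ | 0 < p.re} := fun w hw ↦ by
    rw [mem_ofPred_eq, Complex.re_ofReal_mul, re_sinh]
    exact mul_pos hc (mul_pos (sinh_pos_iff.2 hw.1) (cos_pos_of_mem_Ioo hw.2))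
  exact (differentiable_besselKernel n).diffContOnCl.smul
    ((diffContOnCl_laplaceTransform hf).comp (Differentiable.diffContOnCl (by fun_prop)) hmaps)

section HankelIntegrand

variable {τ : ℝ} {f : ℂ → ℂ} (hτ : 0 ≤ τ) (hf : ExpType τ f)
  (hint : IntegrableOn (fun x : ℝ ↦ f x) (Ioi 0))
include hτ hf hint

lemma ExpType.laplaceTransform_neg_of_comp_neg {a : ℂ} (hpar : ∀ z, f (-z) = a * f z) {p : ℂ}
    (hre : p.re = 0) (hp : τ < ‖p‖) :
    laplaceTransform (fun x : ℝ ↦ f x) (-p) = -a * laplaceTransform (fun x : ℝ ↦ f x) p := by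
  have heq := hf.eqOn_laplaceTransform_borelTransform hτ hint
  rw [heq ⟨by simp [hre], by simpa using hp⟩, heq ⟨hre.ge, hp⟩,
    borelTransform_neg_of_comp_neg hpar]

lemma ExpType.hankelIntegrand_left_eq_right {n : ℕ} (hpar : ∀ z, f (-z) = (-1) ^ (n + 1) * f z)
    {c : ℝ} (hc : τ < c) (u : ℝ) :
    hankelIntegrand n (fun x : ℝ ↦ f x) c (u + (-(π / 2) : ℝ) * Complex.I) =
      hankelIntegrand n (fun x : ℝ ↦ f x) c (u + (π / 2 : ℝ) * Complex.I) := by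
  set w : ℂ := u + (π / 2 : ℝ) * Complex.I with hw
  have hshift : u + (-(π / 2) : ℝ) * Complex.I = w - π * Complex.I := by
    rw [hw]
    push_cast
    ring
  have hp : c * Complex.sinh w = (c * cosh u : ℝ) * Complex.I := by
    rw [hw, Complex.sinh_add, Complex.sinh_mul_I, Complex.cosh_mul_I, ← Complex.ofReal_cos,
      ← Complex.ofReal_sin, cos_pi_div_two, sin_pi_div_two]
    push_cast
    ring
  have hnorm : τ < ‖c * Complex.sinh w‖ := by
    have hc0 : 0 ≤ c := hτ.trans hc.le
    rw [hp, norm_mul, Complex.norm_I, mul_one, Complex.norm_real, norm_of_nonneg (by positivity)]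
    exact hc.trans_le (le_mul_of_one_le_right hc0 (one_le_cosh u))
  rw [hankelIntegrand, hankelIntegrand, hshift, besselKernel_sub_pi_mul_I,
    Complex.sinh_sub_pi_mul_I, mul_neg,
    hf.laplaceTransform_neg_of_comp_neg hτ hint hpar (by rw [hp]; simp) hnorm, pow_succ]
  rcases n.even_or_odd with hn | hn <;> simp [hn.neg_one_pow]

lemma ExpType.tendsto_hankelIntegrand {n : ℕ} (hord : n ≤ analyticOrderAt f 0) {c : ℝ}
    (hc : 0 < c) :
    Tendsto (hankelIntegrand n (fun x : ℝ ↦ f x) c)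
      (comap Complex.re atTop ⊓ 𝓟 (univ ×ℂ Icc (-(π / 2)) (π / 2))) (𝓝 0) := by
  have hc' : (c : ℂ) ≠ 0 := Complex.ofReal_ne_zero.2 hc.ne'
  refine ((tendsto_besselKernel_mul_comp_sinh (hf.borelTransform_isBigO hτ hord) hc').mono_left
    inf_le_left).congr' ?_
  rw [EventuallyEq, eventually_inf_principal]
  filter_upwards [tendsto_comap.eventually_ge_atTop 0,
    (tendsto_norm_cobounded_atTop.comp
      (tendsto_const_mul_sinh_cobounded hc')).eventually_gt_atTop τ]
    with w hre hnorm him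
  have hnonneg : 0 ≤ (c * Complex.sinh w).re := by
    rw [Complex.re_ofReal_mul, re_sinh]
    exact mul_nonneg hc.le (mul_nonneg (sinh_nonneg_iff.2 hre) (cos_nonneg_of_mem_Icc him.2))
  rw [hankelIntegrand, hf.eqOn_laplaceTransform_borelTransform hτ hint ⟨hnonneg, hnorm⟩]

end HankelIntegrand

theorem hankel_vanishes_odd_order_general {τ : ℝ} (hτ : 0 ≤ τ) {n : ℕ} {h : ℂ → ℂ}
    (hh : ExpType τ h) (hpar : ∀ z, h (-z) = (-1) ^ (n + 1) * h z)
    (hord : n ≤ analyticOrderAt h 0) (hint : IntegrableOn (fun x : ℝ ↦ h x) (Ioi 0))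
    {lam : ℝ} (hlam : τ < lam) :
    ∫ x in Ioi (0 : ℝ), h x * (besselJ n (lam * x) : ℂ) = 0 := by
  have hlam0 : 0 < lam := hτ.trans_lt hlam
  have hcontour : (∫ x in Ioi (0 : ℝ), h x * (besselJ n (lam * x) : ℂ)) * (2 * π) = 0 := by
    rw [integral_mul_besselJ hint]
    exact integral_vertical_eq_zero_of_tendsto_zero (neg_lt_self (half_pos pi_pos))
      (diffContOnCl_hankelIntegrand hint n hlam0)
      (fun u _ ↦ hh.hankelIntegrand_left_eq_right hτ hint hpar hlam u)
      (hh.tendsto_hankelIntegrand hτ hint hord hlam0)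
  simpa [pi_ne_zero] using hcontour

theorem hankel_vanishes_odd_order
    (τ : ℝ) (hτ : 0 ≤ τ) (m l : ℕ) (hl : l < m)
    (h : ℂ → ℂ) (b : ℕ → ℂ) (hb : b 0 ≠ 0)
    (hh : ExpType τ h)
    (hexp : ∀ z : ℂ, HasSum (fun j : ℕ => b j * z ^ (2 * m + 2 * j)) (h z))
    (hreal : ∀ x : ℝ, 0 ≤ x → (h x).im = 0)
    (hint : IntegrableOn (fun x : ℝ => h x) (Set.Ioi 0)) :
    ∀ lam : ℝ, τ < lam →
      ∫ x in Set.Ioi (0 : ℝ), h x * (besselJ (2 * l + 1) (lam * x) : ℂ) = 0 := by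
  have heven := comp_neg_eq_of_hasSum_even_pow (fun j ↦ by simp [← mul_add]) hexp
  have hord := le_analyticOrderAt_zero_of_hasSum (n := 2 * l + 1) (fun i j hij ↦ by omega)
    (fun j ↦ by omega) (.of_forall hexp)
  exact fun lam ↦ hankel_vanishes_odd_order_general hτ hh
    (fun z ↦ by rw [heven, Even.neg_one_pow (by simp [parity_simps]), one_mul]) hord hint
end

section
/- The integral ∫_0^∞ x·J_2(πx) / (Γ(2+x)·Γ(2−x)) dx equals 2/π², where 1/(Γ(2+x)·Γ(2−x)) denotes the entire even function of x given by the product of reciprocal Gamma functions. -/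
open MeasureTheory Real

/-!
As a function of `x`, the kernel `x / (Γ(2 + x) Γ(2 - x))` is band-limited: by the reflection
formula it equals `sin (π x) / (π (1 - x ^ 2))`, which is the sine transform of `π⁻¹ sin t` on
`[0, π]`. Exchanging the integrals moves the problem to the sine transform of `J_n (a x)`.
That transform converges only conditionally, so it is damped by `exp (-ε x)`, which turns it into
the imaginary part of the Laplace transform `q ^ n / √(p ^ 2 + a ^ 2)` at `p = ε - i t`, where
`q = (√(p ^ 2 + a ^ 2) - p) / a`. As `ε → 0` its value for `|t| < a` becomes
`sin (n arcsin (t / a)) / √(a ^ 2 - t ^ 2)`, which for `n = 2` is just `2 t / a ^ 2`.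
Since `π ≤ a`, only such `t` occur.
-/
section BesselIntegral

open Complex (I)
open Metric (sphere)

theorem hasSum_circleIntegral_of_norm_le {F : ℕ → ℂ → ℂ} {f : ℂ → ℂ} {u : ℕ → ℝ} {c : ℂ} {R : ℝ}
    (hF : ∀ k, ContinuousOn (F k) (sphere c |R|)) (hu : Summable u)
    (hFu : ∀ k, ∀ w ∈ sphere c |R|, ‖F k w‖ ≤ u k)
    (hf : ∀ w ∈ sphere c |R|, HasSum (fun k ↦ F k w) (f w)) :
    HasSum (fun k ↦ ∮ w in C(c, R), F k w) (∮ w in C(c, R), f w) := by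
  have mem_sphere (θ : ℝ) := circleMap_mem_sphere' c R θ
  refine intervalIntegral.hasSum_integral_of_dominated_convergence (fun k _ ↦ |R| * u k)
    (fun k ↦ ?_) (fun k ↦ .of_forall fun θ _ ↦ ?_) (.of_forall fun θ _ ↦ hu.mul_left _)
    intervalIntegrable_const (.of_forall fun θ _ ↦ (hf _ (mem_sphere θ)).const_smul _)
  · have hF_comp : Continuous fun θ ↦ F k (circleMap c R θ) :=
      (hF k).comp_continuous (continuous_circleMap c R) mem_sphere
    simp only [deriv_circleMap]
    exact (((continuous_circleMap 0 R).mul continuous_const).smul hF_comp).aestronglyMeasurable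
  · simpa [deriv_circleMap] using
      mul_le_mul_of_nonneg_left (hFu k _ (mem_sphere θ)) (abs_nonneg R)

theorem circleIntegral_cexp_const_mul_div_pow (c : ℂ) (m : ℕ) :
    ∮ w in C(0, 1), Complex.exp (c * w) / w ^ (m + 1) = 2 * π * I * (c ^ m / m.factorial) := by
  have cauchy := DiffContOnCl.circleIntegral_one_div_sub_center_pow_smul (c := 0) one_pos m
    (Differentiable.diffContOnCl (f := fun w ↦ Complex.exp (c * w)) (by fun_prop))
  simp only [iteratedDeriv_cexp_const_mul, sub_zero, smul_eq_mul, one_div_mul_eq_div, mul_zero,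
    Complex.exp_zero, mul_one] at cauchy
  rw [cauchy]
  ring

-- Only the factor `exp (-c / w)` is expanded, so that Cauchy's formula evaluates each term.
theorem hasSum_circleIntegral_cexp_mul_sub_inv (n : ℕ) (c : ℂ) :
    HasSum
      (fun k : ℕ ↦ ∮ w in C(0, 1),
        (-c) ^ k / k.factorial * (Complex.exp (c * w) / w ^ (n + k + 1)))
      (∮ w in C(0, 1), Complex.exp (c * (w - w⁻¹)) / w ^ (n + 1)) := by
  refine hasSum_circleIntegral_of_norm_le
    (u := fun k ↦ ‖c‖ ^ k / k.factorial * Real.exp ‖c‖) (fun k ↦ ?_)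
    ((Real.summable_pow_div_factorial _).mul_right _) (fun k w hw ↦ ?_) (fun w hw ↦ ?_)
  · refine continuousOn_const.mul (ContinuousOn.div (by fun_prop) (by fun_prop) fun w hw ↦ ?_)
    exact pow_ne_zero _ (ne_zero_of_mem_sphere (by simp) ⟨w, hw⟩)
  · have hw : ‖w‖ = 1 := by simpa using hw
    have hexp : ‖Complex.exp (c * w)‖ ≤ Real.exp ‖c‖ := by
      simpa [hw] using Complex.norm_exp_le_exp_norm (c * w)
    rw [norm_mul, norm_div, norm_div, norm_pow, norm_pow, norm_neg, hw, one_pow, div_one,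
      Complex.norm_natCast]
    gcongr
  · have hw : w ≠ 0 := ne_zero_of_mem_sphere (by simp) ⟨w, hw⟩
    have hexp := (NormedSpace.expSeries_div_hasSum_exp (-c * w⁻¹)).mul_right
      (Complex.exp (c * w) / w ^ (n + 1))
    rw [← Complex.exp_eq_exp_ℂ, ← mul_div_assoc, ← Complex.exp_add,
      show -c * w⁻¹ + c * w = c * (w - w⁻¹) by ring] at hexp
    refine hexp.congr_fun fun k ↦ ?_
    rw [mul_pow, inv_pow]
    field_simp
    ring

theorem circleIntegral_eq_besselJ (n : ℕ) (z : ℝ) :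
    ∮ w in C(0, 1), Complex.exp (z / 2 * (w - w⁻¹)) / w ^ (n + 1) = 2 * π * I * besselJ n z := by
  have hterm (k : ℕ) : ∮ w in C(0, 1),
        (-(z / 2) : ℂ) ^ k / k.factorial * (Complex.exp (z / 2 * w) / w ^ (n + k + 1)) =
      2 * π * I * ((-1) ^ k / (k.factorial * (n + k).factorial) * (z / 2) ^ (n + 2 * k) : ℝ) := by
    rw [circleIntegral.integral_const_mul, circleIntegral_cexp_const_mul_div_pow, neg_pow]
    push_cast
    ring
  rw [← (hasSum_circleIntegral_cexp_mul_sub_inv n (z / 2)).tsum_eq, tsum_congr hterm,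
    tsum_mul_left, ← Complex.ofReal_tsum, besselJ]

theorem circleMap_zero_one_sub_inv (θ : ℝ) :
    circleMap 0 1 θ - (circleMap 0 1 θ)⁻¹ = 2 * Real.sin θ * I := by
  rw [circleMap_zero, Complex.ofReal_one, one_mul, ← Complex.exp_neg, Complex.ofReal_sin,
    Complex.sin, ← neg_mul]
  linear_combination (Complex.exp (θ * I) - Complex.exp (-θ * I)) * Complex.I_sq

theorem circleMap_zero_one_pow (n : ℕ) (θ : ℝ) :
    circleMap 0 1 θ ^ n = Complex.exp ((n * θ : ℝ) * I) := by
  rw [circleMap_zero, Complex.ofReal_one, one_mul, ← Complex.exp_nat_mul]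
  push_cast
  ring_nf

theorem ofReal_besselJ_eq_integral (n : ℕ) (z : ℝ) :
    (besselJ n z : ℂ) =
      (2 * π : ℂ)⁻¹ * ∫ θ in 0..2 * π, Complex.exp ((n * θ - z * Real.sin θ : ℝ) * I) := by
  have integrand (θ : ℝ) : deriv (circleMap 0 1) θ •
        (Complex.exp (z / 2 * (circleMap 0 1 θ - (circleMap 0 1 θ)⁻¹)) /
          circleMap 0 1 θ ^ (n + 1)) =
      I * (starRingEnd ℂ) (Complex.exp ((n * θ - z * Real.sin θ : ℝ) * I)) := by
    have hw : circleMap 0 1 θ ≠ 0 := circleMap_ne_center one_ne_zero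
    rw [circleMap_zero_one_sub_inv, deriv_circleMap, pow_succ, smul_eq_mul, ← Complex.exp_conj]
    field_simp
    rw [circleMap_zero_one_pow, ← Complex.exp_add]
    simp only [Complex.ofReal_mul, Complex.ofReal_natCast, Complex.ofReal_sub, map_mul,
      Complex.conj_I, map_sub, map_natCast, Complex.conj_ofReal, neg_mul]
    ring_nf
  have hJ := circleIntegral_eq_besselJ n z
  simp only [circleIntegral, integrand] at hJ
  rw [intervalIntegral.integral_const_mul, intervalIntegral.intervalIntegral_conj, mul_right_comm,
    mul_comm I, mul_left_inj' Complex.I_ne_zero] at hJ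
  have hJ_conj := congrArg (starRingEnd ℂ) hJ
  simp only [Complex.conj_conj, map_mul, Complex.conj_ofReal, map_ofNat] at hJ_conj
  rw [hJ_conj, inv_mul_cancel_left₀ (by simp [pi_ne_zero])]

theorem abs_besselJ_le_one (n : ℕ) (z : ℝ) : |besselJ n z| ≤ 1 := by
  have hint : ‖∫ θ in 0..2 * π, Complex.exp ((n * θ - z * Real.sin θ : ℝ) * I)‖ ≤
      1 * |2 * π - 0| :=
    intervalIntegral.norm_integral_le_of_norm_le_const fun θ _ ↦
      (Complex.norm_exp_ofReal_mul_I _).le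
  rw [one_mul, sub_zero] at hint
  rw [← Real.norm_eq_abs, ← Complex.norm_real, ofReal_besselJ_eq_integral, norm_mul, norm_inv,
    inv_mul_le_iff₀ (by simp [pi_ne_zero])]
  simpa using hint

theorem continuous_besselJ (n : ℕ) : Continuous (besselJ n) := by
  have hre : besselJ n = fun z ↦
      ((2 * π : ℂ)⁻¹ * ∫ θ in 0..2 * π, Complex.exp ((n * θ - z * Real.sin θ : ℝ) * I)).re := by
    ext z
    rw [← ofReal_besselJ_eq_integral, Complex.ofReal_re]
  rw [hre]
  fun_prop

end BesselIntegral

section LaplaceTransform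

open Complex (I)

variable {n : ℕ} {a : ℝ} {p q : ℂ}

theorem circleIntegral_pow_div_sub_mul_add_inv (n : ℕ) (hq₀ : q ≠ 0) (hq : ‖q‖ < 1) :
    ∮ w in C(0, 1), w ^ n / ((w - q) * (w + q⁻¹)) = 2 * π * I * (q ^ n / (q + q⁻¹)) := by
  have hden {w : ℂ} (hw : w ∈ Metric.closedBall 0 1) : w + q⁻¹ ≠ 0 := by
    intro h
    have hinv : 1 < ‖q⁻¹‖ := by
      rw [norm_inv]
      exact (one_lt_inv₀ (norm_pos_iff.mpr hq₀)).mpr hq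
    rw [mem_closedBall_zero_iff, eq_neg_of_add_eq_zero_left h, norm_neg] at hw
    exact hinv.not_ge hw
  have hdiff : DifferentiableOn ℂ (fun w ↦ w ^ n / (w + q⁻¹)) (Metric.closedBall 0 1) :=
    DifferentiableOn.div (by fun_prop) (by fun_prop) fun w hw ↦ hden hw
  have cauchy := hdiff.circleIntegral_sub_inv_smul (mem_ball_zero_iff.mpr hq)
  simpa only [smul_eq_mul, inv_mul_eq_div, div_div, mul_comm (_ + q⁻¹)] using cauchy

theorem integral_cexp_div_inv_sub_self_add_sin (n : ℕ) (hq₀ : q ≠ 0) (hq : ‖q‖ < 1) :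
    ∫ θ in 0..2 * π, Complex.exp ((n * θ : ℝ) * I) / (q⁻¹ - q + 2 * Real.sin θ * I) =
      2 * π * (q ^ n / (q + q⁻¹)) := by
  have integrand (θ : ℝ) : deriv (circleMap 0 1) θ •
        (circleMap 0 1 θ ^ n / ((circleMap 0 1 θ - q) * (circleMap 0 1 θ + q⁻¹))) =
      I * (Complex.exp ((n * θ : ℝ) * I) / (q⁻¹ - q + 2 * Real.sin θ * I)) := by
    have hw : circleMap 0 1 θ ≠ 0 := circleMap_ne_center one_ne_zero
    rw [← circleMap_zero_one_sub_inv, ← circleMap_zero_one_pow, deriv_circleMap, smul_eq_mul,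
      show (circleMap 0 1 θ - q) * (circleMap 0 1 θ + q⁻¹) =
        circleMap 0 1 θ * (q⁻¹ - q + (circleMap 0 1 θ - (circleMap 0 1 θ)⁻¹)) by
          field_simp
          ring,
      mul_right_comm, ← mul_div_assoc, mul_div_mul_left _ _ hw, mul_comm]
  have hcircle := circleIntegral_pow_div_sub_mul_add_inv n hq₀ hq
  simp only [circleIntegral, integrand] at hcircle
  rwa [intervalIntegral.integral_const_mul, mul_right_comm, mul_comm I,
    mul_left_inj' Complex.I_ne_zero] at hcircle

theorem norm_lt_one_of_re_inv_sub_self_pos (h_add : 0 ≤ (q + q⁻¹).re)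
    (h_sub : 0 < (q⁻¹ - q).re) : ‖q‖ < 1 := by
  rw [Complex.add_re, Complex.inv_re] at h_add
  rw [Complex.sub_re, Complex.inv_re] at h_sub
  have hq : q ≠ 0 := by
    rintro rfl
    simp at h_sub
  have hN : 0 < Complex.normSq q := Complex.normSq_pos.mpr hq
  have hre : 0 < q.re / Complex.normSq q := by linarith
  rw [← sq_lt_one_iff₀ (norm_nonneg q), ← Complex.normSq_eq_norm_sq]
  refine lt_of_mul_lt_mul_left ?_ hre.le
  rw [div_mul_cancel₀ _ hN.ne', mul_one]
  linarith

/-- For `0 < a` and `0 < p.re`, this is the solution `q` of `a * (q⁻¹ - q) = 2 * p` in the open unit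
disc. -/
noncomputable def besselLaplaceRoot (a : ℝ) (p : ℂ) : ℂ :=
  (Complex.sqrt (p ^ 2 + a ^ 2) - p) / a

/-- The Laplace transform at `p` of `x ↦ J_n (a * x)`, for `0 < a` and `0 < p.re`. The branch of the
square root is the principal one, so that the formula extends continuously to the segment of the
imaginary axis between `-a * I` and `a * I`. -/
noncomputable def besselLaplace (n : ℕ) (a : ℝ) (p : ℂ) : ℂ :=
  besselLaplaceRoot a p ^ n / Complex.sqrt (p ^ 2 + a ^ 2)

theorem complexSqrt_sq (z : ℂ) : Complex.sqrt z ^ 2 = z :=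
  Complex.cpow_nat_inv_pow z two_ne_zero

theorem besselLaplaceRoot_mul_sqrt_add_div (ha : a ≠ 0) :
    besselLaplaceRoot a p * ((Complex.sqrt (p ^ 2 + a ^ 2) + p) / a) = 1 := by
  have ha' : (a : ℂ) ≠ 0 := Complex.ofReal_ne_zero.mpr ha
  rw [besselLaplaceRoot]
  field_simp
  linear_combination complexSqrt_sq (p ^ 2 + a ^ 2)

theorem inv_besselLaplaceRoot (ha : a ≠ 0) :
    (besselLaplaceRoot a p)⁻¹ = (Complex.sqrt (p ^ 2 + a ^ 2) + p) / a :=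
  inv_eq_of_mul_eq_one_right (besselLaplaceRoot_mul_sqrt_add_div ha)

theorem besselLaplaceRoot_ne_zero (ha : a ≠ 0) : besselLaplaceRoot a p ≠ 0 :=
  left_ne_zero_of_mul_eq_one (besselLaplaceRoot_mul_sqrt_add_div ha)

theorem inv_besselLaplaceRoot_sub_self (ha : a ≠ 0) :
    (besselLaplaceRoot a p)⁻¹ - besselLaplaceRoot a p = 2 * p / a := by
  rw [inv_besselLaplaceRoot ha, besselLaplaceRoot]
  ring

theorem besselLaplaceRoot_add_inv (ha : a ≠ 0) :
    besselLaplaceRoot a p + (besselLaplaceRoot a p)⁻¹ =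
      2 * Complex.sqrt (p ^ 2 + a ^ 2) / a := by
  rw [inv_besselLaplaceRoot ha, besselLaplaceRoot]
  ring

theorem norm_besselLaplaceRoot_lt_one (ha : 0 < a) (hp : 0 < p.re) :
    ‖besselLaplaceRoot a p‖ < 1 := by
  refine norm_lt_one_of_re_inv_sub_self_pos ?_ ?_
  · have hsqrt : 0 ≤ (Complex.sqrt (p ^ 2 + a ^ 2)).re := by
      rw [Complex.sqrt, Complex.cpow_inv_two_re]
      positivity
    rw [besselLaplaceRoot_add_inv ha.ne', Complex.div_ofReal_re, Complex.mul_re, Complex.re_ofNat,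
      Complex.im_ofNat, zero_mul, sub_zero]
    positivity
  · rw [inv_besselLaplaceRoot_sub_self ha.ne', Complex.div_ofReal_re, Complex.mul_re,
      Complex.re_ofNat, Complex.im_ofNat, zero_mul, sub_zero]
    positivity

theorem integrable_prod_cexp_mul_cexp (hp : 0 < p.re) :
    Integrable
      (Function.uncurry fun θ x : ℝ ↦
        Complex.exp (-p * x) * Complex.exp ((n * θ - a * x * Real.sin θ : ℝ) * I))
      ((volume.restrict (Set.uIoc 0 (2 * π))).prod (volume.restrict (Set.Ioi 0))) := by
  have hexp : IntegrableOn (fun x : ℝ ↦ Complex.exp (-p * x)) (Set.Ioi 0) :=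
    integrableOn_exp_mul_complex_Ioi (by simpa using hp) 0
  have hconst : IntegrableOn (fun _ : ℝ ↦ (1 : ℂ)) (Set.uIoc 0 (2 * π)) :=
    intervalIntegrable_const.def'
  refine (((hconst.mul_prod hexp).mul_bdd (c := 1)
    (g := fun z : ℝ × ℝ ↦ Complex.exp ((n * z.1 - a * z.2 * Real.sin z.1 : ℝ) * I))
    (Continuous.aestronglyMeasurable (by fun_prop))
    (.of_forall fun z ↦ (Complex.norm_exp_ofReal_mul_I _).le))).congr (.of_forall fun z ↦ ?_)
  simp [Function.uncurry]

theorem integral_cexp_neg_mul_mul_cexp (n : ℕ) (a : ℝ) (hp : 0 < p.re) (θ : ℝ) :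
    ∫ x in Set.Ioi (0 : ℝ),
        Complex.exp (-p * x) * Complex.exp ((n * θ - a * x * Real.sin θ : ℝ) * I) =
      Complex.exp ((n * θ : ℝ) * I) / (p + a * Real.sin θ * I) := by
  have integrand (x : ℝ) :
      Complex.exp (-p * x) * Complex.exp ((n * θ - a * x * Real.sin θ : ℝ) * I) =
        Complex.exp ((n * θ : ℝ) * I) * Complex.exp (-(p + a * Real.sin θ * I) * x) := by
    rw [← Complex.exp_add, ← Complex.exp_add]
    push_cast
    ring_nf
  simp only [integrand]
  rw [integral_const_mul, integral_exp_mul_complex_Ioi (by simpa [-Complex.ofReal_sin] using hp)]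
  simp only [Complex.ofReal_zero, mul_zero, Complex.exp_zero, neg_div_neg_eq, mul_one_div]

theorem laplace_besselJ (n : ℕ) (ha : 0 < a) (hp : 0 < p.re) :
    ∫ x in Set.Ioi (0 : ℝ), Complex.exp (-p * x) * besselJ n (a * x) = besselLaplace n a p := by
  have hroot := besselLaplaceRoot_ne_zero (p := p) ha.ne'
  have ha' : (a : ℂ) ≠ 0 := Complex.ofReal_ne_zero.mpr ha.ne'
  have hden (θ : ℝ) : p + a * Real.sin θ * I =
      a / 2 * ((besselLaplaceRoot a p)⁻¹ - besselLaplaceRoot a p + 2 * Real.sin θ * I) := by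
    rw [inv_besselLaplaceRoot_sub_self ha.ne']
    field_simp
  calc ∫ x in Set.Ioi (0 : ℝ), Complex.exp (-p * x) * besselJ n (a * x)
    _ = (2 * π : ℂ)⁻¹ * ∫ x in Set.Ioi (0 : ℝ), ∫ θ in 0..2 * π,
          Complex.exp (-p * x) * Complex.exp ((n * θ - a * x * Real.sin θ : ℝ) * I) := by
      simp only [ofReal_besselJ_eq_integral, intervalIntegral.integral_const_mul]
      rw [← integral_const_mul]
      simp only [mul_left_comm]
    _ = (2 * π : ℂ)⁻¹ * ∫ θ in 0..2 * π,
          Complex.exp ((n * θ : ℝ) * I) / (p + a * Real.sin θ * I) := by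
      rw [← intervalIntegral_integral_swap (integrable_prod_cexp_mul_cexp hp)]
      simp only [integral_cexp_neg_mul_mul_cexp n a hp]
    _ = (2 * π : ℂ)⁻¹ * ((a / 2 : ℂ)⁻¹ * (2 * π * (besselLaplaceRoot a p ^ n /
          (besselLaplaceRoot a p + (besselLaplaceRoot a p)⁻¹)))) := by
      rw [← integral_cexp_div_inv_sub_self_add_sin n hroot (norm_besselLaplaceRoot_lt_one ha hp),
        ← intervalIntegral.integral_const_mul (a / 2 : ℂ)⁻¹]
      simp only [hden, div_mul_eq_div_div_swap, div_eq_inv_mul _ (_ / 2 : ℂ)]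
    _ = besselLaplace n a p := by
      rw [besselLaplaceRoot_add_inv ha.ne', besselLaplace]
      have hpi : (π : ℂ) ≠ 0 := Complex.ofReal_ne_zero.mpr pi_ne_zero
      field_simp

theorem integrableOn_rexp_neg_mul_mul_besselJ (n : ℕ) (a : ℝ) {ε : ℝ} (hε : 0 < ε) :
    IntegrableOn (fun x ↦ Real.exp (-ε * x) * besselJ n (a * x)) (Set.Ioi 0) :=
  (integrableOn_exp_mul_Ioi (neg_lt_zero.mpr hε) 0).mul_bdd
    ((continuous_besselJ n).comp (continuous_const_mul a)).aestronglyMeasurable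
    (.of_forall fun _ ↦ abs_besselJ_le_one n _)

theorem laplace_besselJ_mul_sin (n : ℕ) (ha : 0 < a) {ε : ℝ} (hε : 0 < ε) (t : ℝ) :
    ∫ x in Set.Ioi (0 : ℝ), Real.exp (-ε * x) * besselJ n (a * x) * Real.sin (x * t) =
      (besselLaplace n a (ε - t * I)).im := by
  have hp : 0 < (ε - t * I : ℂ).re := by simpa using hε
  have hint : IntegrableOn
      (fun x : ℝ ↦ Complex.exp (-(ε - t * I) * x) * besselJ n (a * x)) (Set.Ioi 0) :=
    (integrableOn_exp_mul_complex_Ioi (by simpa using hε) 0).mul_bdd (c := 1)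
      (by have := continuous_besselJ n; fun_prop)
      (.of_forall fun x ↦ by simpa using abs_besselJ_le_one n (a * x))
  rw [← laplace_besselJ n ha hp, ← RCLike.im_eq_complex_im, ← integral_im hint]
  refine setIntegral_congr_fun measurableSet_Ioi fun x _ ↦ ?_
  simp only [RCLike.im_eq_complex_im, Complex.exp_im, neg_mul, neg_sub, Complex.mul_re,
    Complex.sub_re, Complex.ofReal_re, Complex.I_re, mul_zero, Complex.ofReal_im,
    Complex.I_im, mul_one, sub_self, zero_sub, Complex.sub_im, Complex.mul_im, add_zero, sub_zero]
  ring_nf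

theorem sq_sub_im_sq_le_re_sq_add_sq (a : ℝ) (p : ℂ) : a ^ 2 - p.im ^ 2 ≤ (p ^ 2 + a ^ 2).re := by
  have hre : (p ^ 2 + a ^ 2 : ℂ).re = p.re ^ 2 - p.im ^ 2 + a ^ 2 := by
    rw [← Complex.ofReal_pow, Complex.add_re, Complex.ofReal_re, sq p, Complex.mul_re]
    ring
  rw [hre]
  linarith [sq_nonneg p.re]

theorem sq_sub_sq_pos_of_abs_lt {t : ℝ} (ht : |t| < a) : 0 < a ^ 2 - t ^ 2 :=
  sub_pos.mpr (sq_lt_sq' (abs_lt.mp ht).1 (abs_lt.mp ht).2)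

theorem norm_besselLaplace_le (n : ℕ) (hp : 0 < p.re) (hpa : |p.im| < a) :
    ‖besselLaplace n a p‖ ≤ (√(a ^ 2 - p.im ^ 2))⁻¹ := by
  have ha : 0 < a := (abs_nonneg _).trans_lt hpa
  have hsqrt : √(a ^ 2 - p.im ^ 2) ≤ ‖Complex.sqrt (p ^ 2 + a ^ 2)‖ := by
    rw [Real.sqrt_le_left (norm_nonneg _), ← norm_pow, complexSqrt_sq]
    exact (sq_sub_im_sq_le_re_sq_add_sq a p).trans (Complex.re_le_norm _)
  rw [besselLaplace, norm_div, norm_pow, div_eq_mul_inv]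
  exact mul_le_of_le_one_left (by positivity)
    (pow_le_one₀ (norm_nonneg _) (norm_besselLaplaceRoot_lt_one ha hp).le) |>.trans
      (inv_anti₀ (Real.sqrt_pos.mpr (sq_sub_sq_pos_of_abs_lt hpa)) hsqrt)

theorem continuousAt_besselLaplace (n : ℕ) (hp : p ^ 2 + a ^ 2 ∈ Complex.slitPlane) :
    ContinuousAt (besselLaplace n a) p := by
  have hsqrt : ContinuousAt (fun p : ℂ ↦ Complex.sqrt (p ^ 2 + a ^ 2)) p :=
    (Complex.continuousAt_sqrt (hp.imp_left le_of_lt)).comp (f := fun p : ℂ ↦ p ^ 2 + (a : ℂ) ^ 2)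
      (by fun_prop)
  have hsqrt_ne : Complex.sqrt (p ^ 2 + a ^ 2) ≠ 0 := fun h ↦
    Complex.slitPlane_ne_zero hp (by rw [← complexSqrt_sq (p ^ 2 + a ^ 2), h, zero_pow two_ne_zero])
  exact (((hsqrt.sub continuousAt_id).div_const _).pow n).div hsqrt hsqrt_ne

theorem sq_add_sq_mem_slitPlane (ha : a ≠ 0) (hp : 0 < p.re) :
    p ^ 2 + (a : ℂ) ^ 2 ∈ Complex.slitPlane := by
  rcases eq_or_ne p.im 0 with him | him
  · refine .inl (lt_of_lt_of_le ?_ (sq_sub_im_sq_le_re_sq_add_sq a p))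
    rw [him, zero_pow two_ne_zero, sub_zero]
    positivity
  · refine .inr ?_
    norm_cast
    simp only [Complex.add_im, sq, Complex.mul_im, Complex.ofReal_im, add_zero]
    have : p.re * p.im ≠ 0 := mul_ne_zero hp.ne' him
    contrapose! this
    linarith

theorem sin_arcsin_div {t : ℝ} (ht : |t| ≤ a) : Real.sin (Real.arcsin (t / a)) = t / a := by
  have habs : |t / a| ≤ 1 := by
    rw [abs_div]
    exact div_le_one_of_le₀ (ht.trans (le_abs_self a)) (abs_nonneg a)
  exact Real.sin_arcsin (abs_le.mp habs).1 (abs_le.mp habs).2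

theorem cos_arcsin_div (ha : 0 < a) (t : ℝ) :
    Real.cos (Real.arcsin (t / a)) = √(a ^ 2 - t ^ 2) / a := by
  rw [Real.cos_arcsin, div_pow, one_sub_div (by positivity), Real.sqrt_div' _ (by positivity),
    Real.sqrt_sq ha.le]

theorem besselLaplace_neg_mul_I (n : ℕ) {t : ℝ} (ht : |t| < a) :
    besselLaplace n a (-t * I) =
      Complex.exp ((n * Real.arcsin (t / a) : ℝ) * I) / √(a ^ 2 - t ^ 2) := by
  have ha : 0 < a := (abs_nonneg _).trans_lt ht
  have hsqrt : Complex.sqrt ((-t * I) ^ 2 + a ^ 2) = √(a ^ 2 - t ^ 2) := by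
    have hsq : ((-t * I) ^ 2 + a ^ 2 : ℂ) = (a ^ 2 - t ^ 2 : ℝ) := by
      push_cast
      linear_combination (t : ℂ) ^ 2 * Complex.I_sq
    rw [hsq, Complex.sqrt_of_nonneg
      (Complex.zero_le_real.mpr (sq_sub_sq_pos_of_abs_lt ht).le), Complex.ofReal_re]
  have hroot : besselLaplaceRoot a (-t * I) = Complex.exp (Real.arcsin (t / a) * I) := by
    rw [besselLaplaceRoot, hsqrt, Complex.exp_mul_I, ← Complex.ofReal_cos, ← Complex.ofReal_sin,
      sin_arcsin_div ht.le, cos_arcsin_div ha]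
    push_cast
    ring
  rw [besselLaplace, hsqrt, hroot, ← Complex.exp_nat_mul]
  push_cast
  ring_nf

theorem tendsto_im_besselLaplace (n : ℕ) {t : ℝ} (ht : |t| < a) :
    Filter.Tendsto (fun ε : ℝ ↦ (besselLaplace n a (ε - t * I)).im) (nhdsWithin 0 (Set.Ioi 0))
      (nhds (Real.sin (n * Real.arcsin (t / a)) / √(a ^ 2 - t ^ 2))) := by
  have hslit : (-t * I : ℂ) ^ 2 + a ^ 2 ∈ Complex.slitPlane := by
    refine .inl (lt_of_lt_of_le ?_ (sq_sub_im_sq_le_re_sq_add_sq a (-t * I)))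
    simpa using sq_sub_sq_pos_of_abs_lt ht
  have hp : Filter.Tendsto (fun ε : ℝ ↦ (ε - t * I : ℂ)) (nhdsWithin 0 (Set.Ioi 0))
      (nhds (-t * I)) :=
    (Continuous.tendsto' (by fun_prop) 0 _ (by simp)).mono_left nhdsWithin_le_nhds
  have hlim := (Complex.continuous_im.tendsto _).comp
    ((continuousAt_besselLaplace n hslit).tendsto.comp hp)
  rwa [besselLaplace_neg_mul_I n ht, Complex.div_ofReal_im, Complex.exp_ofReal_mul_I_im] at hlim

end LaplaceTransform

section SineTransform

open Complex (I)
open Filter Set Topology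

variable {n : ℕ} {a b c : ℝ} {f g : ℝ → ℝ}

theorem tendsto_integral_rexp_neg_mul_mul (hf : IntegrableOn f (Ioi 0)) :
    Tendsto (fun ε : ℝ ↦ ∫ x in Ioi 0, Real.exp (-ε * x) * f x) (𝓝[>] 0)
      (𝓝 (∫ x in Ioi 0, f x)) := by
  refine tendsto_integral_filter_of_dominated_convergence (fun x ↦ |f x|)
    (.of_forall fun ε ↦ ?_) ?_ hf.abs (.of_forall fun x ↦ ?_)
  · exact (Continuous.aestronglyMeasurable (by fun_prop)).mul hf.aestronglyMeasurable
  · filter_upwards [self_mem_nhdsWithin] with ε hε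
    filter_upwards [self_mem_ae_restrict measurableSet_Ioi] with x hx
    rw [norm_mul, Real.norm_eq_abs, Real.norm_eq_abs, Real.abs_exp]
    refine mul_le_of_le_one_left (abs_nonneg _) (Real.exp_le_one_iff.mpr ?_)
    exact mul_nonpos_of_nonpos_of_nonneg (neg_nonpos.mpr (mem_Ioi.mp hε).le) (mem_Ioi.mp hx).le
  · exact (Continuous.tendsto' (by fun_prop) 0 _ (by simp)).mono_left nhdsWithin_le_nhds

theorem integral_rexp_mul_besselJ_mul_sineTransform (n : ℕ) (ha : 0 < a)
    (hg : IntervalIntegrable g volume b c) {ε : ℝ} (hε : 0 < ε) :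
    ∫ x in Ioi 0, Real.exp (-ε * x) * (besselJ n (a * x) * ∫ t in b..c, g t * Real.sin (x * t)) =
      ∫ t in b..c, g t * (besselLaplace n a (ε - t * I)).im := by
  have hint : Integrable
      (Function.uncurry fun t x ↦
        g t * (Real.exp (-ε * x) * besselJ n (a * x) * Real.sin (x * t)))
      ((volume.restrict (uIoc b c)).prod (volume.restrict (Ioi 0))) := by
    have hbdd := (hg.def'.mul_prod (integrableOn_rexp_neg_mul_mul_besselJ n a hε)).mul_bdd (c := 1)
      (g := fun z ↦ Real.sin (z.2 * z.1)) (Continuous.aestronglyMeasurable (by fun_prop))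
      (.of_forall fun z ↦ Real.abs_sin_le_one _)
    simpa only [Function.uncurry_def, mul_assoc] using hbdd
  simp only [← laplace_besselJ_mul_sin n ha hε, ← integral_const_mul]
  rw [intervalIntegral_integral_swap hint]
  simp only [← intervalIntegral.integral_const_mul, mul_assoc, mul_left_comm (g _)]

theorem ae_abs_lt_of_uIcc_subset (hbc : uIcc b c ⊆ Icc (-a) a) :
    ∀ᵐ t : ℝ, t ∈ uIoc b c → |t| < a := by
  filter_upwards [Measure.ae_ne volume a, Measure.ae_ne volume (-a)] with t hta hta' ht
  have hmem := hbc (uIoc_subset_uIcc ht)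
  exact abs_lt.mpr ⟨hmem.1.lt_of_ne' hta', hmem.2.lt_of_ne hta⟩

theorem intervalIntegrable_of_div_sqrt
    (hg : IntervalIntegrable (fun t ↦ g t / √(a ^ 2 - t ^ 2)) volume b c)
    (hbc : uIcc b c ⊆ Icc (-a) a) : IntervalIntegrable g volume b c := by
  refine (hg.mul_continuousOn (g := fun t ↦ √(a ^ 2 - t ^ 2)) (by fun_prop)).congr_ae ?_
  rw [EventuallyEq, ae_restrict_iff' measurableSet_uIoc]
  filter_upwards [ae_abs_lt_of_uIcc_subset hbc] with t habs ht
  exact div_mul_cancel₀ _ (Real.sqrt_pos.mpr (sq_sub_sq_pos_of_abs_lt (habs ht))).ne'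

theorem tendsto_integral_mul_im_besselLaplace (n : ℕ) (ha : 0 < a) (hbc : uIcc b c ⊆ Icc (-a) a)
    (hg : IntervalIntegrable (fun t ↦ g t / √(a ^ 2 - t ^ 2)) volume b c) :
    Tendsto (fun ε : ℝ ↦ ∫ t in b..c, g t * (besselLaplace n a (ε - t * I)).im) (𝓝[>] 0)
      (𝓝 (∫ t in b..c, g t * (Real.sin (n * Real.arcsin (t / a)) / √(a ^ 2 - t ^ 2)))) := by
  refine intervalIntegral.tendsto_integral_filter_of_dominated_convergence
    (fun t ↦ |g t / √(a ^ 2 - t ^ 2)|) ?_ ?_ hg.abs ?_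
  · filter_upwards [self_mem_nhdsWithin] with ε hε
    have hcont : Continuous fun t : ℝ ↦ (besselLaplace n a (ε - t * I)).im :=
      Complex.continuous_im.comp <| continuous_iff_continuousAt.mpr fun t ↦
        (continuousAt_besselLaplace n (sq_add_sq_mem_slitPlane ha.ne' (by simpa using hε))).comp
          (f := fun t : ℝ ↦ (ε - t * I : ℂ)) (by fun_prop)
    exact (intervalIntegrable_of_div_sqrt hg hbc).def'.aestronglyMeasurable.mul
      hcont.aestronglyMeasurable
  · filter_upwards [self_mem_nhdsWithin] with ε hε
    filter_upwards [ae_abs_lt_of_uIcc_subset hbc] with t habs ht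
    rw [norm_mul, Real.norm_eq_abs, Real.norm_eq_abs, abs_div, abs_of_nonneg (Real.sqrt_nonneg _),
      div_eq_mul_inv]
    gcongr
    have hbound := norm_besselLaplace_le (p := ε - t * I) n (by simpa using hε)
      (by simpa using habs ht)
    exact (Complex.abs_im_le_norm _).trans (by simpa using hbound)
  · filter_upwards [ae_abs_lt_of_uIcc_subset hbc] with t habs ht
    exact (tendsto_im_besselLaplace n (habs ht)).const_mul _

theorem integral_besselJ_mul_sineTransform (n : ℕ) (ha : 0 < a) (hbc : uIcc b c ⊆ Icc (-a) a)
    (hg : IntervalIntegrable (fun t ↦ g t / √(a ^ 2 - t ^ 2)) volume b c)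
    (hS : IntegrableOn (fun x ↦ ∫ t in b..c, g t * Real.sin (x * t)) (Ioi 0)) :
    ∫ x in Ioi 0, besselJ n (a * x) * ∫ t in b..c, g t * Real.sin (x * t) =
      ∫ t in b..c, g t * (Real.sin (n * Real.arcsin (t / a)) / √(a ^ 2 - t ^ 2)) := by
  have hJS : IntegrableOn
      (fun x ↦ besselJ n (a * x) * ∫ t in b..c, g t * Real.sin (x * t)) (Ioi 0) :=
    hS.bdd_mul ((continuous_besselJ n).comp (continuous_const_mul a)).aestronglyMeasurable
      (.of_forall fun _ ↦ abs_besselJ_le_one n _)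
  refine tendsto_nhds_unique (tendsto_integral_rexp_neg_mul_mul hJS)
    ((tendsto_integral_mul_im_besselLaplace n ha hbc hg).congr' ?_)
  filter_upwards [self_mem_nhdsWithin] with ε hε
  exact (integral_rexp_mul_besselJ_mul_sineTransform n ha
    (intervalIntegrable_of_div_sqrt hg hbc) hε).symm

end SineTransform

section GammaKernel

open Set

variable {a t x : ℝ}

theorem one_sub_sq_mul_integral_sin_mul_sin (x : ℝ) :
    (1 - x ^ 2) * ∫ t in 0..π, Real.sin t * Real.sin (x * t) = Real.sin (π * x) := by
  have hderiv (t : ℝ) : HasDerivAt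
      (fun t ↦ x * (Real.sin t * Real.cos (x * t)) - Real.cos t * Real.sin (x * t))
      ((1 - x ^ 2) * (Real.sin t * Real.sin (x * t))) t := by
    have hmul : HasDerivAt (fun t ↦ x * t) x t := by simpa using (hasDerivAt_id t).const_mul x
    refine ((((Real.hasDerivAt_sin t).mul hmul.cos).const_mul x).sub
      ((Real.hasDerivAt_cos t).mul hmul.sin)).congr_deriv ?_
    ring
  rw [← intervalIntegral.integral_const_mul,
    intervalIntegral.integral_eq_sub_of_hasDerivAt (fun t _ ↦ hderiv t)
      (Continuous.intervalIntegrable (by fun_prop) _ _)]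
  simp [mul_comm]

theorem integrable_integral_sin_mul_sin :
    Integrable fun x ↦ ∫ t in 0..π, Real.sin t * Real.sin (x * t) := by
  refine (integrable_inv_one_add_sq.const_mul (2 * π + 1)).mono'
    (Continuous.aestronglyMeasurable (by fun_prop)) (.of_forall fun x ↦ ?_)
  have hbound : ‖∫ t in 0..π, Real.sin t * Real.sin (x * t)‖ ≤ 1 * |π - 0| := by
    refine intervalIntegral.norm_integral_le_of_norm_le_const fun t _ ↦ ?_
    rw [norm_mul]
    exact mul_le_one₀ (Real.abs_sin_le_one _) (norm_nonneg _) (Real.abs_sin_le_one _)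
  rw [one_mul, sub_zero, abs_of_pos pi_pos, Real.norm_eq_abs, abs_le] at hbound
  rw [← div_eq_mul_inv, le_div_iff₀ (by positivity), Real.norm_eq_abs,
    ← abs_of_pos (show 0 < 1 + x ^ 2 by positivity), ← abs_mul, abs_le]
  have hsin := abs_le.mp (Real.abs_sin_le_one (π * x))
  have hkernel := one_sub_sq_mul_integral_sin_mul_sin x
  constructor <;> linarith [hbound.1, hbound.2, hsin.1, hsin.2]

theorem mul_inv_Gamma_two_add_mul_Gamma_two_sub (hx₀ : x ≠ 0) (hx₁ : x ^ 2 ≠ 1) :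
    x * (Real.Gamma (2 + x) * Real.Gamma (2 - x))⁻¹ =
      π⁻¹ * ∫ t in 0..π, Real.sin t * Real.sin (x * t) := by
  have h_add : 1 + x ≠ 0 := fun h ↦ hx₁ (by linear_combination (x - 1) * h)
  have h_sub : 1 - x ≠ 0 := fun h ↦ hx₁ (by linear_combination (-1 - x) * h)
  have hGamma_add : Real.Gamma (2 + x) = (1 + x) * (x * Real.Gamma x) := by
    rw [← Real.Gamma_add_one hx₀, add_comm x, ← Real.Gamma_add_one h_add]
    ring_nf
  have hGamma_sub : Real.Gamma (2 - x) = (1 - x) * Real.Gamma (1 - x) := by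
    rw [← Real.Gamma_add_one h_sub]
    ring_nf
  have hreflect : Real.Gamma (2 + x) * Real.Gamma (2 - x) =
      (1 - x ^ 2) * x * (π / Real.sin (π * x)) := by
    rw [hGamma_add, hGamma_sub, ← Real.Gamma_mul_Gamma_one_sub]
    ring
  have hsq : 1 - x ^ 2 ≠ 0 := sub_ne_zero.mpr hx₁.symm
  rw [hreflect, mul_inv, inv_div, ← one_sub_sq_mul_integral_sin_mul_sin]
  field_simp

theorem sin_le_sqrt_sq_sub_sq (ha : π ≤ a) (ht₀ : 0 ≤ t) (ht : t ≤ π) :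
    Real.sin t ≤ √(a ^ 2 - t ^ 2) := by
  have hsub : 0 ≤ π - t := sub_nonneg.mpr ht
  calc Real.sin t = Real.sin (π - t) := (Real.sin_pi_sub t).symm
    _ ≤ π - t := Real.sin_le hsub
    _ ≤ √(a ^ 2 - t ^ 2) := Real.le_sqrt_of_sq_le (by nlinarith)

theorem intervalIntegrable_sin_div_sqrt (ha : π ≤ a) :
    IntervalIntegrable (fun t ↦ Real.sin t / √(a ^ 2 - t ^ 2)) volume 0 π := by
  refine (intervalIntegrable_const (c := (1 : ℝ))).mono_fun'
    (Measurable.aestronglyMeasurable (by fun_prop)) ?_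
  filter_upwards [self_mem_ae_restrict measurableSet_uIoc] with t ht
  rw [uIoc_of_le pi_pos.le] at ht
  rw [Real.norm_of_nonneg (div_nonneg (Real.sin_nonneg_of_mem_Icc (Ioc_subset_Icc_self ht))
    (Real.sqrt_nonneg _))]
  exact div_le_one_of_le₀ (sin_le_sqrt_sq_sub_sq ha ht.1.le ht.2) (Real.sqrt_nonneg _)

theorem integral_mul_besselJ_mul_inv_Gamma (n : ℕ) (ha : π ≤ a) :
    ∫ x in Ioi 0, x * besselJ n (a * x) * (Real.Gamma (2 + x) * Real.Gamma (2 - x))⁻¹ =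
      π⁻¹ * ∫ t in 0..π,
        Real.sin t * (Real.sin (n * Real.arcsin (t / a)) / √(a ^ 2 - t ^ 2)) := by
  have hsubset : uIcc 0 π ⊆ Icc (-a) a := by
    rw [uIcc_of_le pi_pos.le]
    exact Icc_subset_Icc (by linarith [pi_pos]) ha
  rw [← integral_besselJ_mul_sineTransform n (pi_pos.trans_le ha) hsubset
    (intervalIntegrable_sin_div_sqrt ha) integrable_integral_sin_mul_sin.integrableOn,
    ← integral_const_mul]
  refine setIntegral_congr_ae measurableSet_Ioi ?_
  filter_upwards [Measure.ae_ne volume 1] with x hx₁ hx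
  have hsq : x ^ 2 ≠ 1 := (pow_eq_one_iff_of_nonneg hx.le two_ne_zero).not.mpr hx₁
  rw [mul_right_comm, mul_inv_Gamma_two_add_mul_Gamma_two_sub hx.ne' hsq]
  ring

theorem sin_two_mul_arcsin_div_div_sqrt (ht : |t| < a) :
    Real.sin (2 * Real.arcsin (t / a)) / √(a ^ 2 - t ^ 2) = 2 * t / a ^ 2 := by
  have ha : 0 < a := (abs_nonneg t).trans_lt ht
  have hsqrt : √(a ^ 2 - t ^ 2) ≠ 0 := (Real.sqrt_pos.mpr (sq_sub_sq_pos_of_abs_lt ht)).ne'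
  rw [Real.sin_two_mul, sin_arcsin_div ht.le, cos_arcsin_div ha]
  field_simp

theorem integral_mul_sin_zero_pi : ∫ t in 0..π, t * Real.sin t = π := by
  have hderiv (t : ℝ) : HasDerivAt (fun t ↦ Real.sin t - t * Real.cos t) (t * Real.sin t) t := by
    refine ((Real.hasDerivAt_sin t).sub
      ((hasDerivAt_id t).mul (Real.hasDerivAt_cos t))).congr_deriv ?_
    simp
  rw [intervalIntegral.integral_eq_sub_of_hasDerivAt (fun t _ ↦ hderiv t)
    (Continuous.intervalIntegrable (by fun_prop) _ _)]
  simp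

end GammaKernel

theorem hankel_gamma_special_case_J2_general {a : ℝ} (ha : π ≤ a) :
    ∫ x in Set.Ioi (0 : ℝ),
        x * besselJ 2 (a * x) * (Real.Gamma (2 + x) * Real.Gamma (2 - x))⁻¹ = 2 / a ^ 2 := by
  have integrand : ∀ t ∈ Set.uIoo 0 π,
      Real.sin t * (Real.sin ((2 : ℕ) * Real.arcsin (t / a)) / √(a ^ 2 - t ^ 2)) =
        2 / a ^ 2 * (t * Real.sin t) := by
    intro t ht
    rw [Set.uIoo_of_le pi_pos.le] at ht
    have habs : |t| < a := by rw [abs_of_pos ht.1]; exact ht.2.trans_le ha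
    rw [Nat.cast_ofNat, sin_two_mul_arcsin_div_div_sqrt habs]
    ring
  rw [integral_mul_besselJ_mul_inv_Gamma 2 ha, intervalIntegral.integral_congr_uIoo integrand,
    intervalIntegral.integral_const_mul, integral_mul_sin_zero_pi]
  field_simp

theorem hankel_gamma_special_case_J2 :
    ∫ x in Set.Ioi (0 : ℝ),
        x * besselJ 2 (π * x) * (Real.Gamma (2 + x) * Real.Gamma (2 - x))⁻¹ = 2 / π ^ 2 :=
  hankel_gamma_special_case_J2_general le_rfl
end
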